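/- Let (V,E) be any member of the SpGEMM DAG family 𝒢(A,B), let S ≥ 1 be an integer, and let {V_1,…,V_h} be an S-partition of (V,E). Then there exists a partition {𝒱_1,…,𝒱_h} of the fine-grained vertex set 𝒱 (with the same number h of parts) such that |W^A(𝒱_i)| ≤ S, |W^B(𝒱_i)| ≤ S, and |W^C(𝒱_i)| ≤ S for each i ∈ [h]. -/

import Mathlib

/-- The multiplication set `V^m`. -/
def Vm (SA SB : Set (ℕ × ℕ)) : Set (ℕ × ℕ × ℕ) :=
  {t | (t.1, t.2.1) ∈ SA ∧ (t.2.1, t.2.2) ∈ SB}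

/-- The nonzero structure `S_C` of the output matrix. -/
def SC (SA SB : Set (ℕ × ℕ)) : Set (ℕ × ℕ) :=
  {p | ∃ k, (p.1, k) ∈ SA ∧ (k, p.2) ∈ SB}

/-- A member of the SpGEMM DAG family `𝒢(A,B)`: a finite DAG whose vertices are
the pairwise distinct input vertices `v^A_{ik}` (`(i,k) ∈ S_A`) and `v^B_{kj}`
(`(k,j) ∈ S_B`), the multiplication vertices `v_{ikj}` (`(i,k,j) ∈ V^m`), and
the vertices of a summation tree `T_{ij}` for each `(i,j) ∈ S_C`; each `T_{ij}`
is a finite directed tree oriented toward a single root `root (i,j)`, whose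
leaves (zero-indegree vertices) are exactly the multiplication vertices
`v_{ikj}`, and whose non-leaf vertices are distinct from the vertices of every
other tree and from all input and multiplication vertices.  The edges are the
input edges `(v^A_{ik}, v_{ikj})` and `(v^B_{kj}, v_{ikj})` for
`(i,k,j) ∈ V^m` together with all summation-tree edges. -/
structure SpGEMMDag (SA SB : Set (ℕ × ℕ)) where
  /-- the vertex type -/
  V : Type
  /-- the DAG is finite -/
  finV : Finite V
  /-- the edge relation -/
  E : V → V → Prop
  /-- input vertices `v^A_{ik}` -/
  vA : ℕ × ℕ → V
  /-- input vertices `v^B_{kj}` -/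
  vB : ℕ × ℕ → V
  /-- multiplication vertices `v_{ikj}` -/
  vm : ℕ × ℕ × ℕ → V
  /-- vertex set of the summation tree `T_{ij}` -/
  tree : ℕ × ℕ → Set V
  /-- edge relation of the summation tree `T_{ij}` -/
  treeE : ℕ × ℕ → V → V → Prop
  /-- root of the summation tree `T_{ij}` -/
  root : ℕ × ℕ → V
  /-- the graph is acyclic -/
  acyclic : ∀ v : V, ¬ Relation.TransGen E v v
  /-- the `v^A` vertices are pairwise distinct -/
  vA_inj : Set.InjOn vA SA
  /-- the `v^B` vertices are pairwise distinct -/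
  vB_inj : Set.InjOn vB SB
  /-- the multiplication vertices are pairwise distinct -/
  vm_inj : Set.InjOn vm (Vm SA SB)
  /-- the `v^A` and `v^B` vertices are distinct -/
  vA_ne_vB : ∀ p ∈ SA, ∀ q ∈ SB, vA p ≠ vB q
  /-- input vertices `v^A` do not lie in any summation tree -/
  vA_notin_tree : ∀ p ∈ SA, ∀ q ∈ SC SA SB, vA p ∉ tree q
  /-- input vertices `v^B` do not lie in any summation tree -/
  vB_notin_tree : ∀ p ∈ SB, ∀ q ∈ SC SA SB, vB p ∉ tree q
  /-- distinct summation trees are vertex-disjoint -/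
  trees_disjoint : ∀ p ∈ SC SA SB, ∀ q ∈ SC SA SB, p ≠ q → Disjoint (tree p) (tree q)
  /-- `v_{ikj}` is a vertex of `T_{ij}` -/
  vm_mem_tree : ∀ t ∈ Vm SA SB, vm t ∈ tree (t.1, t.2.2)
  /-- `v_{ikj}` lies in no tree other than `T_{ij}` -/
  vm_mem_tree_only : ∀ t ∈ Vm SA SB, ∀ p ∈ SC SA SB, vm t ∈ tree p → p = (t.1, t.2.2)
  /-- every vertex is an input vertex or a summation-tree vertex (multiplication
  vertices are the leaves of the summation trees) -/
  vertex_cases : ∀ v : V, (∃ p ∈ SA, v = vA p) ∨ (∃ p ∈ SB, v = vB p) ∨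
      (∃ p ∈ SC SA SB, v ∈ tree p)
  /-- the root of `T_{ij}` is a vertex of `T_{ij}` -/
  root_mem : ∀ p ∈ SC SA SB, root p ∈ tree p
  /-- tree edges join vertices of their tree -/
  treeE_mem : ∀ p u v, treeE p u v → p ∈ SC SA SB ∧ u ∈ tree p ∧ v ∈ tree p
  /-- all tree edges are oriented toward the root: every non-root tree vertex
  has exactly one outgoing tree edge -/
  succ_unique : ∀ p ∈ SC SA SB, ∀ u ∈ tree p, u ≠ root p → ∃! v, treeE p u v
  /-- the root has no outgoing tree edge -/
  root_no_succ : ∀ p ∈ SC SA SB, ∀ v, ¬ treeE p (root p) v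
  /-- the zero-indegree vertices (leaves) of `T_{ij}` are exactly the
  multiplication vertices `v_{ikj}` -/
  leaves_iff : ∀ p ∈ SC SA SB, ∀ v ∈ tree p,
      ((∀ u, ¬ treeE p u v) ↔ ∃ k, (p.1, k, p.2) ∈ Vm SA SB ∧ v = vm (p.1, k, p.2))
  /-- the edge set consists exactly of the input edges and the tree edges -/
  edge_iff : ∀ u v, E u v ↔
      ((∃ t ∈ Vm SA SB, (u = vA (t.1, t.2.1) ∨ u = vB (t.2.1, t.2.2)) ∧ v = vm t) ∨
       (∃ p, treeE p u v))

/-- An input of the DAG: a vertex with no incoming edges. -/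
def SpGEMMDag.IsInput {SA SB : Set (ℕ × ℕ)} (G : SpGEMMDag SA SB) (v : G.V) : Prop :=
  ∀ u, ¬ G.E u v

/-- `D` is a dominator set of `U`: every directed path from an input to a
vertex of `U` contains a vertex of `D`. -/
def SpGEMMDag.IsDominator {SA SB : Set (ℕ × ℕ)} (G : SpGEMMDag SA SB)
    (U D : Set G.V) : Prop :=
  ∀ (a : G.V) (l : List G.V), List.Chain G.E a l → G.IsInput a →
    (a :: l).getLast (List.cons_ne_nil a l) ∈ U → ∃ d ∈ D, d ∈ a :: l

/-- The minimum set of `U`: elements of `U` with no successor in `U`. -/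
def SpGEMMDag.minSet {SA SB : Set (ℕ × ℕ)} (G : SpGEMMDag SA SB)
    (U : Set G.V) : Set G.V :=
  {u ∈ U | ∀ v, G.E u v → v ∉ U}

/-- Vertices of the fine-grained SpGEMM hypergraph. -/
inductive FGVertex : Type
  | mult (i k j : ℕ)
  | nzA (i k : ℕ)
  | nzB (k j : ℕ)
  | nzC (i j : ℕ)
deriving DecidableEq

/-- The fine-grained vertex set `𝒱`. -/
def FGV (SA SB : Set (ℕ × ℕ)) : Set FGVertex :=
  {v | (∃ t ∈ Vm SA SB, v = .mult t.1 t.2.1 t.2.2) ∨ (∃ p ∈ SA, v = .nzA p.1 p.2) ∨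
       (∃ p ∈ SB, v = .nzB p.1 p.2) ∨ (∃ p ∈ SC SA SB, v = .nzC p.1 p.2)}

/-- The net `n^A_{ik}`. -/
def netA (SB : Set (ℕ × ℕ)) (i k : ℕ) : Set FGVertex :=
  {v | (∃ j, (k, j) ∈ SB ∧ v = .mult i k j) ∨ v = .nzA i k}

/-- The net `n^B_{kj}`. -/
def netB (SA : Set (ℕ × ℕ)) (k j : ℕ) : Set FGVertex :=
  {v | (∃ i, (i, k) ∈ SA ∧ v = .mult i k j) ∨ v = .nzB k j}

/-- The net `n^C_{ij}`. -/
def netC (SA SB : Set (ℕ × ℕ)) (i j : ℕ) : Set FGVertex :=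
  {v | (∃ k, (i, k) ∈ SA ∧ (k, j) ∈ SB ∧ v = .mult i k j) ∨ v = .nzC i j}

/-- `W^A(𝒱')`: the `A`-nets meeting `𝒱'`. -/
def WA (SA SB : Set (ℕ × ℕ)) (X : Set FGVertex) : Set (ℕ × ℕ) :=
  {p ∈ SA | (netA SB p.1 p.2 ∩ X).Nonempty}

/-- `W^B(𝒱')`: the `B`-nets meeting `𝒱'`. -/
def WB (SA SB : Set (ℕ × ℕ)) (X : Set FGVertex) : Set (ℕ × ℕ) :=
  {p ∈ SB | (netB SA p.1 p.2 ∩ X).Nonempty}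

/-- `W^C(𝒱')`: the `C`-nets meeting `𝒱'`. -/
def WC (SA SB : Set (ℕ × ℕ)) (X : Set FGVertex) : Set (ℕ × ℕ) :=
  {p ∈ SC SA SB | (netC SA SB p.1 p.2 ∩ X).Nonempty}

/-- An indexed partition of the set `X` into `n` (possibly empty) parts. -/
def IsIndexedPartition {α : Type*} (X : Set α) {n : ℕ} (P : Fin n → Set α) : Prop :=
  (∀ i, P i ⊆ X) ∧ (⋃ i, P i) = X ∧ ∀ i j, i ≠ j → Disjoint (P i) (P j)

/-- An `S`-partition of the DAG `G`: a partition `{V_1,…,V_h}` of the vertices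
such that each part has a dominator set of size at most `S`, each part has
minimum set of size at most `S`, and there is no cyclic dependence among the
parts, where `V_i` depends on `V_j` if `(V_i × V_j) ∩ E ≠ ∅`. -/
def SpGEMMDag.IsSPartition {SA SB : Set (ℕ × ℕ)} (G : SpGEMMDag SA SB)
    (S : ℕ) {h : ℕ} (P : Fin h → Set G.V) : Prop :=
  ((⋃ i, P i) = Set.univ ∧ (∀ i, (P i).Nonempty) ∧
    ∀ i j, i ≠ j → Disjoint (P i) (P j)) ∧
  (∀ i, ∃ D : Set G.V, G.IsDominator (P i) D ∧ D.ncard ≤ S) ∧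
  (∀ i, (G.minSet (P i)).ncard ≤ S) ∧
  (∀ i : Fin h, ¬ Relation.TransGen
      (fun a b : Fin h => a ≠ b ∧ ∃ u ∈ P a, ∃ v ∈ P b, G.E u v) i i)

/-- The DAG vertex representing a fine-grained vertex; `nzC i j` is represented by the root of
the summation tree `T_{ij}`. -/
def SpGEMMDag.ofFGVertex {SA SB : Set (ℕ × ℕ)} (G : SpGEMMDag SA SB) : FGVertex → G.V
  | .mult i k j => G.vm (i, k, j)
  | .nzA i k => G.vA (i, k)
  | .nzB k j => G.vB (k, j)
  | .nzC i j => G.root (i, j)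

/-- The fine-grained vertices represented by an element of `U`. -/
def SpGEMMDag.fgPart {SA SB : Set (ℕ × ℕ)} (G : SpGEMMDag SA SB) (U : Set G.V) :
    Set FGVertex :=
  {x ∈ FGV SA SB | G.ofFGVertex x ∈ U}

/-- A set injecting into a finite set through a relation has at most as many elements. -/
theorem Set.ncard_le_ncard_of_rel {α β : Type*} {s : Set α} {t : Set β} (ht : t.Finite)
    (R : α → β → Prop) (hex : ∀ a ∈ s, ∃ b ∈ t, R a b)
    (hinj : ∀ a ∈ s, ∀ a' ∈ s, ∀ b, R a b → R a' b → a = a') : s.ncard ≤ t.ncard := by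
  rcases s.eq_empty_or_nonempty with rfl | ⟨a₀, ha₀⟩
  · simp
  have : Nonempty β := (hex a₀ ha₀).nonempty
  choose! f hft hfR using hex
  refine Set.ncard_le_ncard_of_injOn f hft (fun a ha a' ha' hf => ?_) ht
  exact hinj a ha a' ha' (f a) (hfR a ha) (hf ▸ hfR a' ha')

theorem mem_SC_of_mem_Vm {SA SB : Set (ℕ × ℕ)} {t : ℕ × ℕ × ℕ} (ht : t ∈ Vm SA SB) :
    (t.1, t.2.2) ∈ SC SA SB :=
  ⟨t.2.1, ht⟩

namespace SpGEMMDag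

variable {SA SB : Set (ℕ × ℕ)} (G : SpGEMMDag SA SB)

theorem exists_mem_tree_of_edge {u v : G.V} (he : G.E u v) :
    ∃ p ∈ SC SA SB, v ∈ G.tree p := by
  rcases (G.edge_iff u v).1 he with ⟨t, ht, -, rfl⟩ | ⟨p, hp⟩
  · exact ⟨_, mem_SC_of_mem_Vm ht, G.vm_mem_tree t ht⟩
  · obtain ⟨hpC, -, hv⟩ := G.treeE_mem p u v hp
    exact ⟨p, hpC, hv⟩

theorem isInput_vA {p : ℕ × ℕ} (hp : p ∈ SA) : G.IsInput (G.vA p) := fun _ he =>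
  let ⟨q, hq, hmem⟩ := G.exists_mem_tree_of_edge he
  G.vA_notin_tree p hp q hq hmem

theorem isInput_vB {p : ℕ × ℕ} (hp : p ∈ SB) : G.IsInput (G.vB p) := fun _ he =>
  let ⟨q, hq, hmem⟩ := G.exists_mem_tree_of_edge he
  G.vB_notin_tree p hp q hq hmem

theorem vA_ne_vm {p : ℕ × ℕ} (hp : p ∈ SA) {t : ℕ × ℕ × ℕ} (ht : t ∈ Vm SA SB) :
    G.vA p ≠ G.vm t := fun h =>
  G.vA_notin_tree p hp _ (mem_SC_of_mem_Vm ht) (h ▸ G.vm_mem_tree t ht)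

theorem vB_ne_vm {p : ℕ × ℕ} (hp : p ∈ SB) {t : ℕ × ℕ × ℕ} (ht : t ∈ Vm SA SB) :
    G.vB p ≠ G.vm t := fun h =>
  G.vB_notin_tree p hp _ (mem_SC_of_mem_Vm ht) (h ▸ G.vm_mem_tree t ht)

/-- Summation trees are closed under out-neighbors. -/
theorem mem_tree_of_edge {p : ℕ × ℕ} (hp : p ∈ SC SA SB) {u v : G.V} (hu : u ∈ G.tree p)
    (he : G.E u v) : v ∈ G.tree p := by
  rcases (G.edge_iff u v).1 he with ⟨t, ht, rfl | rfl, -⟩ | ⟨q, hq⟩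
  · exact absurd hu (G.vA_notin_tree _ ht.1 p hp)
  · exact absurd hu (G.vB_notin_tree _ ht.2 p hp)
  · obtain ⟨hqC, huq, hv⟩ := G.treeE_mem q u v hq
    by_cases hpq : p = q
    · exact hpq ▸ hv
    · exact absurd huq (Set.disjoint_left.1 (G.trees_disjoint p hp q hqC hpq) hu)

/-- Every part meeting a summation tree has an element of its minimum set in that tree. -/
theorem exists_mem_minSet_mem_tree {p : ℕ × ℕ} (hp : p ∈ SC SA SB) {U : Set G.V} {u : G.V}
    (hu : u ∈ U) (hut : u ∈ G.tree p) : ∃ d ∈ G.minSet U, d ∈ G.tree p := by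
  have := G.finV
  have : Std.Irrefl (Relation.TransGen (Function.swap G.E)) :=
    ⟨fun v hv => G.acyclic v (Relation.transGen_swap.1 hv)⟩
  obtain ⟨d, ⟨hdU, hdt⟩, hmin⟩ :=
    (Finite.wellFounded_of_trans_of_irrefl (Relation.TransGen (Function.swap G.E))).has_min
      (U ∩ G.tree p) ⟨u, hu, hut⟩
  exact ⟨d, ⟨hdU, fun v he hv =>
    hmin v ⟨hv, G.mem_tree_of_edge hp hdt he⟩ (Relation.TransGen.single he)⟩, hdt⟩

variable {G}

theorem IsDominator.mem_of_isInput {U D : Set G.V} (hD : G.IsDominator U D) {a : G.V}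
    (ha : G.IsInput a) (haU : a ∈ U) : a ∈ D := by
  simpa using hD a [] (List.isChain_singleton a) ha (by simpa using haU)

theorem IsDominator.mem_or_mem_of_edge {U D : Set G.V} (hD : G.IsDominator U D) {a v : G.V}
    (ha : G.IsInput a) (he : G.E a v) (hv : v ∈ U) : a ∈ D ∨ v ∈ D := by
  obtain ⟨d, hd, hmem⟩ := hD a [v] (List.isChain_pair.2 he) ha (by simpa using hv)
  rcases List.mem_pair.1 hmem with rfl | rfl
  exacts [.inl hd, .inr hd]

theorem ncard_WA_fgPart_le {U D : Set G.V} (hD : G.IsDominator U D) :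
    (WA SA SB (G.fgPart U)).ncard ≤ D.ncard := by
  have := G.finV
  refine Set.ncard_le_ncard_of_rel D.toFinite
    (fun p d => d = G.vA p ∨ ∃ j, (p.2, j) ∈ SB ∧ d = G.vm (p.1, p.2, j)) ?_ ?_
  · rintro ⟨i, k⟩ ⟨hp, x, ⟨j, hj, rfl⟩ | rfl, -, hU⟩
    · have he : G.E (G.vA (i, k)) (G.vm (i, k, j)) :=
        (G.edge_iff _ _).2 (.inl ⟨(i, k, j), ⟨hp, hj⟩, .inl rfl, rfl⟩)
      rcases hD.mem_or_mem_of_edge (G.isInput_vA hp) he hU with h | h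
      exacts [⟨_, h, .inl rfl⟩, ⟨_, h, .inr ⟨j, hj, rfl⟩⟩]
    · exact ⟨_, hD.mem_of_isInput (G.isInput_vA hp) hU, .inl rfl⟩
  · rintro ⟨i, k⟩ ⟨hp, -⟩ ⟨i', k'⟩ ⟨hp', -⟩ d (rfl | ⟨j, hj, rfl⟩) (h | ⟨j', hj', h⟩)
    · exact G.vA_inj hp hp' h
    · exact absurd h (G.vA_ne_vm hp ⟨hp', hj'⟩)
    · exact absurd h.symm (G.vA_ne_vm hp' ⟨hp, hj⟩)
    · have := G.vm_inj ⟨hp, hj⟩ ⟨hp', hj'⟩ h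
      simp_all

theorem ncard_WB_fgPart_le {U D : Set G.V} (hD : G.IsDominator U D) :
    (WB SA SB (G.fgPart U)).ncard ≤ D.ncard := by
  have := G.finV
  refine Set.ncard_le_ncard_of_rel D.toFinite
    (fun p d => d = G.vB p ∨ ∃ i, (i, p.1) ∈ SA ∧ d = G.vm (i, p.1, p.2)) ?_ ?_
  · rintro ⟨k, j⟩ ⟨hp, x, ⟨i, hi, rfl⟩ | rfl, -, hU⟩
    · have he : G.E (G.vB (k, j)) (G.vm (i, k, j)) :=
        (G.edge_iff _ _).2 (.inl ⟨(i, k, j), ⟨hi, hp⟩, .inr rfl, rfl⟩)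
      rcases hD.mem_or_mem_of_edge (G.isInput_vB hp) he hU with h | h
      exacts [⟨_, h, .inl rfl⟩, ⟨_, h, .inr ⟨i, hi, rfl⟩⟩]
    · exact ⟨_, hD.mem_of_isInput (G.isInput_vB hp) hU, .inl rfl⟩
  · rintro ⟨k, j⟩ ⟨hp, -⟩ ⟨k', j'⟩ ⟨hp', -⟩ d (rfl | ⟨i, hi, rfl⟩) (h | ⟨i', hi', h⟩)
    · exact G.vB_inj hp hp' h
    · exact absurd h (G.vB_ne_vm hp ⟨hi', hp'⟩)
    · exact absurd h.symm (G.vB_ne_vm hp' ⟨hi, hp⟩)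
    · have := G.vm_inj ⟨hi, hp⟩ ⟨hi', hp'⟩ h
      simp_all

theorem ncard_WC_fgPart_le (U : Set G.V) :
    (WC SA SB (G.fgPart U)).ncard ≤ (G.minSet U).ncard := by
  have := G.finV
  refine Set.ncard_le_ncard_of_rel (G.minSet U).toFinite (fun p d => d ∈ G.tree p) ?_ ?_
  · rintro ⟨i, j⟩ ⟨hp, x, ⟨k, hA, hB, rfl⟩ | rfl, -, hU⟩
    · exact G.exists_mem_minSet_mem_tree hp hU (G.vm_mem_tree (i, k, j) ⟨hA, hB⟩)
    · exact G.exists_mem_minSet_mem_tree hp hU (G.root_mem (i, j) hp)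
  · intro p hp q hq d hdp hdq
    by_contra hpq
    exact Set.disjoint_left.1 (G.trees_disjoint p hp.1 q hq.1 hpq) hdp hdq

theorem isIndexedPartition_fgPart {h : ℕ} {P : Fin h → Set G.V} (hU : (⋃ i, P i) = Set.univ)
    (hdisj : ∀ i j, i ≠ j → Disjoint (P i) (P j)) :
    IsIndexedPartition (FGV SA SB) fun i => G.fgPart (P i) := by
  refine ⟨fun i x hx => hx.1, Set.Subset.antisymm (Set.iUnion_subset fun i x hx => hx.1) ?_,
    fun i j hij => Set.disjoint_left.2 fun x hi hj =>
      Set.disjoint_left.1 (hdisj i j hij) hi.2 hj.2⟩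
  intro x hx
  obtain ⟨i, hi⟩ := Set.mem_iUnion.1 (hU ▸ Set.mem_univ (G.ofFGVertex x))
  exact Set.mem_iUnion.2 ⟨i, hx, hi⟩

end SpGEMMDag

/-- Any `S`-partition `{V_1,…,V_h}` of a member of `𝒢(A,B)`
yields a partition `{𝒱_1,…,𝒱_h}` of the fine-grained vertex set `𝒱` with
`|W^A(𝒱_i)| ≤ S`, `|W^B(𝒱_i)| ≤ S`, and `|W^C(𝒱_i)| ≤ S` for each `i`. -/
theorem spartition_to_hypergraph_partition
    (SA SB : Set (ℕ × ℕ)) (G : SpGEMMDag SA SB)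
    (S : ℕ) (hS : 1 ≤ S) (h : ℕ) (P : Fin h → Set G.V)
    (hP : G.IsSPartition S P) :
    ∃ Q : Fin h → Set FGVertex, IsIndexedPartition (FGV SA SB) Q ∧
      ∀ i, (WA SA SB (Q i)).ncard ≤ S ∧ (WB SA SB (Q i)).ncard ≤ S ∧
        (WC SA SB (Q i)).ncard ≤ S := by
  obtain ⟨⟨hU, -, hdisj⟩, hdom, hmin, -⟩ := hP
  refine ⟨fun i => G.fgPart (P i), SpGEMMDag.isIndexedPartition_fgPart hU hdisj, fun i => ?_⟩
  obtain ⟨D, hD, hcard⟩ := hdom i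
  exact ⟨(SpGEMMDag.ncard_WA_fgPart_le hD).trans hcard,
    (SpGEMMDag.ncard_WB_fgPart_le hD).trans hcard,
    (SpGEMMDag.ncard_WC_fgPart_le (P i)).trans (hmin i)⟩
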